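/- arXiv:2208.01108 — 3 statements merged into one kernel-verified Lean document; each statement's English description precedes it below -/
import Mathlib

section
/- Let X be a real reflexive Banach space, let A : X → X* be a pseudomonotone, bounded, and coercive operator, and let b ∈ X*. Then there exists a solution u ∈ X of the equation A u = b. (Theorem 2.10, the main theorem on pseudomonotone operators.) -/
/-!
Galerkin approximation: on each finite-dimensional subspace `W` coercivity yields `x ∈ W` with
`A x w = b w` for all `w ∈ W`. These solutions stay in a bounded set, so by reflexivity the net of
solutions along growing `W` has a weak cluster point `u`. Given `w`, a sequence of solutions on
subspaces containing `u` and `w` converges weakly to `u`; along it `⟨A x, x - u⟩ = ⟨b, x - u⟩`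
tends to `0`, and pseudomonotonicity at `u - w` and `u + w` turns `⟨A x, w⟩ = ⟨b, w⟩` into
`⟨A u, w⟩ = ⟨b, w⟩`.

The finite-dimensional equation needs only that `id + g` is onto for continuous compactly supported
`g`. For smooth `g` the integral of `det (1 + t g') * φ (x + t g)` over a compact set is independent
of `t` near `0`; for `φ` polynomial it is a polynomial in `t`, hence constant up to `t = 1`, and by
density this holds for every continuous `φ`. A bump `φ` missing the range would have integral `0`.

To extract a sequence from a weak closure, choose its terms so that the countably many functionals
that norm the span of the terms already converge along it to their values at the prescribed limit;
they separate that limit from every other weak cluster point of the sequence.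
-/

open Filter Topology

section Polynomials

open MeasureTheory Polynomial Set

theorem exists_polynomial_eval_eq_det_one_add_smul {R M : Type*} [CommRing R] [Nontrivial R]
    [AddCommGroup M] [Module R M] [Module.Free R M] [Module.Finite R M] (B : Module.End R M) :
    ∃ p : R[X], p.natDegree ≤ Module.finrank R M ∧
      ∀ t, p.eval t = LinearMap.det (1 + t • B) := by
  classical
  let e := Module.finBasis R M
  refine ⟨((X : R[X]) • (LinearMap.toMatrix e e B).map C + (1 : Matrix _ _ R).map C).det,
    by simpa using natDegree_det_X_add_C_le (LinearMap.toMatrix e e B) 1, fun t => ?_⟩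
  rw [← LinearMap.det_toMatrix e, ← coe_evalRingHom, RingHom.map_det, LinearEquiv.map_add,
    LinearEquiv.map_smul, LinearMap.toMatrix_one, add_comm]
  congr 1
  ext i j
  simp [Matrix.one_apply, apply_ite (eval t), mul_comm t]

theorem exists_polynomial_eval_eq_integral {α : Type*} [MeasurableSpace α] {μ : Measure α}
    {p : α → ℝ[X]} {N : ℕ} (hdeg : ∀ x, (p x).natDegree ≤ N)
    (hint : ∀ t, Integrable (fun x => (p x).eval t) μ) :
    ∃ q : ℝ[X], ∀ t, q.eval t = ∫ x, (p x).eval t ∂μ := by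
  let nodes := Finset.range (N + 1)
  have hinj : InjOn (Nat.cast : ℕ → ℝ) nodes := Nat.cast_injective.injOn
  have hLagrange (x : α) (t : ℝ) : (p x).eval t =
      ∑ i ∈ nodes, (p x).eval (i : ℝ) * (Lagrange.basis nodes (Nat.cast : ℕ → ℝ) i).eval t := by
    have hlt : (p x).degree < nodes.card :=
      degree_le_natDegree.trans_lt (by
        rw [Finset.card_range]; exact_mod_cast Nat.lt_succ_of_le (hdeg x))
    conv_lhs => rw [Lagrange.eq_interpolate hinj hlt, Lagrange.interpolate_apply]
    simp [eval_finsetSum]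
  refine ⟨∑ i ∈ nodes, C (∫ x, (p x).eval (i : ℝ) ∂μ) * Lagrange.basis nodes Nat.cast i,
    fun t => ?_⟩
  simp_rw [fun x => hLagrange x t]
  rw [integral_finsetSum nodes fun i _ => (hint i).mul_const _]
  simp [eval_finsetSum, integral_mul_const]

end Polynomials

section ChangeOfVariables

open MeasureTheory Metric Set

theorem image_eq_of_bijective_of_forall_notMem_eq {α : Type*} {f : α → α}
    (hf : Function.Bijective f) {s : Set α} (hs : ∀ x ∉ s, f x = x) : f '' s = s := by
  have hcompl : f '' sᶜ = sᶜ := (image_congr hs).trans (image_id _)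
  rwa [image_compl_eq hf, compl_inj_iff] at hcompl

theorem bijective_id_add_of_lipschitzWith {E : Type*} [NormedAddCommGroup E] [CompleteSpace E]
    {g : E → E} {c : NNReal} (hg : LipschitzWith c g) (hc : c < 1) :
    Function.Bijective fun x => x + g x := by
  rw [Function.bijective_iff_existsUnique]
  intro y
  have hcontr : ContractingWith c fun x => y - g x :=
    ⟨hc, by simpa using (LipschitzWith.const' y (K := 0)).sub hg⟩
  refine ⟨hcontr.fixedPoint, ?_, fun x hx => hcontr.fixedPoint_unique ?_⟩
  · exact add_eq_of_eq_sub hcontr.fixedPoint_isFixedPt.symm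
  · exact (eq_sub_of_add_eq hx).symm

variable {E : Type*} [NormedAddCommGroup E] [NormedSpace ℝ E] [FiniteDimensional ℝ E]

theorem eventually_setIntegral_comp_add_smul_eq [MeasurableSpace E] [BorelSpace E]
    (μ : Measure E) [μ.IsAddHaarMeasure] {g : E → E} (hg : ContDiff ℝ 1 g) {K : Set E}
    (hK : IsCompact K) (hgK : ∀ x ∉ K, g x = 0) :
    ∀ᶠ t in 𝓝 (0 : ℝ), ∀ φ : E → ℝ,
      ∫ x in K, (1 + t • fderiv ℝ g x).det * φ (x + t • g x) ∂μ = ∫ x in K, φ x ∂μ := by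
  have : CompleteSpace E := FiniteDimensional.complete ℝ E
  obtain ⟨c, hc⟩ := hg.lipschitzWith_of_hasCompactSupport (.intro hK hgK) one_ne_zero
  have hdet : ∀ᶠ L in 𝓝 (0 : E →L[ℝ] E), 0 < (1 + L).det :=
    (ContinuousLinearMap.continuous_det.comp
      (continuous_const_add 1)).continuousAt.eventually_const_lt
        (by simp [ContinuousLinearMap.det, ContinuousLinearMap.one_def])
  obtain ⟨δ, hδ, hdet⟩ := Metric.eventually_nhds_iff_ball.1 hdet
  have hsmall : ∀ᶠ t in 𝓝 (0 : ℝ), ‖t‖ * c < min δ 1 :=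
    (continuous_norm.mul continuous_const).continuousAt.eventually_lt_const (by simp [hδ])
  filter_upwards [hsmall] with t ht φ
  have hdet_pos (x : E) : 0 < (1 + t • fderiv ℝ g x).det := by
    refine hdet _ (mem_ball_zero_iff.2 ?_)
    rw [norm_smul]
    exact (mul_le_mul_of_nonneg_left (norm_fderiv_le_of_lipschitz ℝ hc) (norm_nonneg t)).trans_lt
      (ht.trans_le (min_le_left _ _))
  have hbij : Function.Bijective fun x => x + t • g x :=
    bijective_id_add_of_lipschitzWith ((lipschitzWith_smul t).comp hc)
      (NNReal.coe_lt_coe.1 (ht.trans_le (min_le_right _ _)))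
  have himage : (fun x => x + t • g x) '' K = K :=
    image_eq_of_bijective_of_forall_notMem_eq hbij fun x hx => by simp [hgK x hx]
  have hderiv (x : E) : HasFDerivWithinAt (fun x => x + t • g x) (1 + t • fderiv ℝ g x) K x :=
    ((hasFDerivAt_id x).add
      ((hg.differentiable one_ne_zero x).hasFDerivAt.const_smul t)).hasFDerivWithinAt
  have hchange := integral_image_eq_integral_abs_det_fderiv_smul μ hK.measurableSet
    (fun x _ => hderiv x) hbij.injective.injOn φ
  simpa only [himage, abs_of_pos (hdet_pos _), smul_eq_mul] using hchange.symm

end ChangeOfVariables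

section CompactOpen

open MeasureTheory Metric

variable {X : Type*} [TopologicalSpace X]

theorem dense_subalgebra_of_separatesPoints {A : Subalgebra ℝ C(X, ℝ)} (hA : A.SeparatesPoints) :
    Dense (A : Set C(X, ℝ)) := by
  intro f
  rw [mem_closure_iff_nhds_basis
    (nhds_basis_uniformity uniformity_basis_dist.compactConvergenceUniformity)]
  rintro ⟨K, ε⟩ ⟨hK, hε⟩
  exact ContinuousMap.exists_mem_subalgebra_near_continuous_of_isCompact_of_separatesPoints
    hA f hK hε

theorem continuous_setIntegral_continuousMap [T2Space X] [MeasurableSpace X]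
    [OpensMeasurableSpace X] {μ : Measure X} [IsFiniteMeasureOnCompacts μ] {K : Set X}
    (hK : IsCompact K) : Continuous fun f : C(X, ℝ) => ∫ x in K, f x ∂μ := by
  have hint (f : C(X, ℝ)) : IntegrableOn f K μ := f.continuous.continuousOn.integrableOn_compact hK
  refine continuous_iff_continuousAt.2 fun f => Metric.tendsto_nhds.2 fun ε hε => ?_
  obtain ⟨δ, hδ, hδε⟩ := exists_pos_mul_lt hε (μ.real K)
  filter_upwards [tendstoUniformlyOn_iff.1
    (ContinuousMap.tendsto_iff_forall_isCompact_tendstoUniformlyOn.1 tendsto_id K hK) δ hδ]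
    with h hh
  rw [dist_eq_norm, ← integral_sub (hint h) (hint f)]
  refine (norm_setIntegral_le_of_norm_le_const hK.measure_lt_top fun x hx => ?_).trans_lt
    (mul_comm δ _ ▸ hδε)
  rw [← dist_eq_norm, dist_comm]
  exact (hh x hx).le

end CompactOpen

section PolynomialTestFunctions

open MeasureTheory Polynomial

/-- The algebra of continuous functions whose restrictions to all parametrised lines
`t ↦ x + t • v` are polynomials in `t` of bounded degree. Stone-Weierstrass makes these the
test functions of the change of variables formula. -/
def polynomialOnLines (E : Type*) [NormedAddCommGroup E] [NormedSpace ℝ E] :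
    Subalgebra ℝ C(E, ℝ) where
  carrier := {φ | ∃ N, ∀ x v, ∃ p : ℝ[X], p.natDegree ≤ N ∧ ∀ t, p.eval t = φ (x + t • v)}
  mul_mem' := by
    rintro φ ψ ⟨N, hφ⟩ ⟨M, hψ⟩
    refine ⟨N + M, fun x v => ?_⟩
    obtain ⟨p, hpN, hp⟩ := hφ x v
    obtain ⟨q, hqM, hq⟩ := hψ x v
    exact ⟨p * q, natDegree_mul_le_of_le hpN hqM, fun t => by simp [hp, hq]⟩
  add_mem' := by
    rintro φ ψ ⟨N, hφ⟩ ⟨M, hψ⟩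
    refine ⟨max N M, fun x v => ?_⟩
    obtain ⟨p, hpN, hp⟩ := hφ x v
    obtain ⟨q, hqM, hq⟩ := hψ x v
    exact ⟨p + q, natDegree_add_le_of_le hpN hqM, fun t => by simp [hp, hq]⟩
  algebraMap_mem' r := ⟨0, fun _ _ => ⟨C r, by simp, by simp⟩⟩

variable {E : Type*} [NormedAddCommGroup E] [NormedSpace ℝ E]

theorem coe_strongDual_mem_polynomialOnLines (f : StrongDual ℝ E) :
    (f : C(E, ℝ)) ∈ polynomialOnLines E :=
  ⟨1, fun x v => ⟨C (f v) * X + C (f x), natDegree_linear_le, fun t => by simp; ring⟩⟩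

theorem polynomialOnLines_separatesPoints : (polynomialOnLines E).SeparatesPoints := by
  intro x y hxy
  obtain ⟨f, hf⟩ := SeparatingDual.exists_separating_of_ne (R := ℝ) hxy
  exact ⟨f, ⟨f, coe_strongDual_mem_polynomialOnLines f, rfl⟩, hf⟩

theorem continuous_det_one_add_smul_fderiv {g : E → E} (hg : ContDiff ℝ 1 g) (t : ℝ) :
    Continuous fun x => (1 + t • fderiv ℝ g x).det :=
  ContinuousLinearMap.continuous_det.comp
    (((hg.continuous_fderiv one_ne_zero).const_smul t).const_add 1)

variable [FiniteDimensional ℝ E] [MeasurableSpace E] [BorelSpace E] (μ : Measure E)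
  [μ.IsAddHaarMeasure] {g : E → E} {K : Set E}

/- Both sides are polynomials in the scaling parameter `t` of the perturbation `t • g`, and they
agree for small `t`. -/
theorem setIntegral_comp_add_eq_of_mem_polynomialOnLines (hg : ContDiff ℝ 1 g)
    (hK : IsCompact K) (hgK : ∀ x ∉ K, g x = 0) {φ : C(E, ℝ)} (hφ : φ ∈ polynomialOnLines E) :
    ∫ x in K, (1 + fderiv ℝ g x).det * φ (x + g x) ∂μ = ∫ x in K, φ x ∂μ := by
  obtain ⟨N, hφ⟩ := hφ
  have hpoly (x : E) : ∃ p : ℝ[X], p.natDegree ≤ Module.finrank ℝ E + N ∧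
      ∀ t, p.eval t = (1 + t • fderiv ℝ g x).det * φ (x + t • g x) := by
    obtain ⟨p, hp_deg, hp⟩ :=
      exists_polynomial_eval_eq_det_one_add_smul (fderiv ℝ g x : Module.End ℝ E)
    obtain ⟨q, hq_deg, hq⟩ := hφ x (g x)
    refine ⟨p * q, natDegree_mul_le_of_le hp_deg hq_deg, fun t => ?_⟩
    rw [eval_mul, hp, hq]
    rfl
  choose p hp_deg hp using hpoly
  obtain ⟨q, hq⟩ := exists_polynomial_eval_eq_integral (μ := μ.restrict K) hp_deg fun t => by
    simp_rw [hp]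
    exact ((continuous_det_one_add_smul_fderiv hg t).mul (φ.continuous.comp
      (continuous_id.add (hg.continuous.const_smul t)))).continuousOn.integrableOn_compact hK
  have hq_const : q = C (∫ x in K, φ x ∂μ) := by
    refine eq_of_infinite_eval_eq _ _ (infinite_of_mem_nhds (0 : ℝ) ?_)
    filter_upwards [eventually_setIntegral_comp_add_smul_eq μ hg hK hgK] with t ht
    simp only [eval_C, hq, hp, ht]
  have hq_one := hq 1
  simpa only [hq_const, eval_C, hp, one_smul, eq_comm] using hq_one

theorem setIntegral_comp_add_eq (hg : ContDiff ℝ 1 g) (hK : IsCompact K)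
    (hgK : ∀ x ∉ K, g x = 0) (φ : C(E, ℝ)) :
    ∫ x in K, (1 + fderiv ℝ g x).det * φ (x + g x) ∂μ = ∫ x in K, φ x ∂μ := by
  let w : C(E, ℝ) := ⟨fun x => (1 + fderiv ℝ g x).det, by
    simpa only [one_smul] using continuous_det_one_add_smul_fderiv hg 1⟩
  let F : C(E, E) := ⟨fun x => x + g x, continuous_id.add hg.continuous⟩
  have hleft : Continuous fun φ : C(E, ℝ) => ∫ x in K, (w * φ.comp F) x ∂μ :=
    (continuous_setIntegral_continuousMap hK).comp
      (continuous_const.mul (ContinuousMap.continuous_precomp F))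
  exact congr_fun (hleft.ext_on
    (dense_subalgebra_of_separatesPoints polynomialOnLines_separatesPoints)
    (continuous_setIntegral_continuousMap hK)
    fun φ hφ => setIntegral_comp_add_eq_of_mem_polynomialOnLines μ hg hK hgK hφ) φ

end PolynomialTestFunctions

section Surjectivity

open MeasureTheory Metric Set

variable {E : Type*} [NormedAddCommGroup E] [NormedSpace ℝ E] [FiniteDimensional ℝ E] {g : E → E}

theorem denseRange_id_add_of_contDiff (hg : ContDiff ℝ 1 g) (hg_supp : HasCompactSupport g) :
    DenseRange fun x => x + g x := by
  borelize E
  let μ : Measure E := .addHaar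
  refine denseRange_iff.2 fun y ε hε => ?_
  by_contra! hfar
  let φ : C(E, ℝ) := ⟨fun z => max 0 (ε - dist y z), by fun_prop⟩
  let K := tsupport g ∪ closedBall y ε
  have hK : IsCompact K := hg_supp.union (isCompact_closedBall y ε)
  have hgK (x : E) (hx : x ∉ K) : g x = 0 :=
    image_eq_zero_of_notMem_tsupport fun h => hx (.inl h)
  have hφK (x : E) (hx : x ∉ K) : φ x = 0 :=
    max_eq_left (sub_nonpos.2 (not_le.1 fun h => hx (.inr (mem_closedBall'.2 h))).le)
  have hφ_zero : ∫ x in K, φ x ∂μ = 0 := by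
    rw [← setIntegral_comp_add_eq μ hg hK hgK φ]
    have hφ_range (x : E) : φ (x + g x) = 0 := max_eq_left (sub_nonpos.2 (hfar x))
    simp only [hφ_range, mul_zero, integral_zero]
  refine hφ_zero.not_gt ?_
  rw [setIntegral_eq_integral_of_forall_compl_eq_zero hφK]
  refine φ.continuous.integral_pos_of_hasCompactSupport_nonneg_nonzero (.intro hK hφK)
    (fun x => le_max_left _ _) (x := y) ?_
  simp [φ, hε.ne', hε.le]

theorem denseRange_id_add_of_continuous (hg : Continuous g) (hg_supp : HasCompactSupport g) :
    DenseRange fun x => x + g x := by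
  refine denseRange_iff.2 fun y ε hε => ?_
  obtain ⟨h, hh, hhg, hh_supp⟩ := hg.exists_contDiff_approx 1 (ε := fun _ => ε / 2)
    continuous_const fun _ => half_pos hε
  obtain ⟨x, hx⟩ := denseRange_iff.1 (denseRange_id_add_of_contDiff hh (hg_supp.mono hh_supp)) y
    (ε / 2) (half_pos hε)
  refine ⟨x, (dist_triangle y (x + h x) (x + g x)).trans_lt ?_⟩
  rw [dist_add_left, ← add_halves ε]
  exact add_lt_add hx (hhg x)

theorem surjective_id_add_of_hasCompactSupport (hg : Continuous g) (hg_supp : HasCompactSupport g) :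
    Function.Surjective fun x => x + g x := by
  have hzero : g =ᶠ[cocompact E] 0 :=
    coclosedCompact_eq_cocompact (X := E) ▸ hasCompactSupport_iff_eventuallyEq.1 hg_supp
  have hproper : IsProperMap fun x => x + g x :=
    isProperMap_iff_tendsto_cocompact.2 ⟨continuous_id.add hg,
      tendsto_id.congr' (hzero.mono fun x hx => by simp [hx])⟩
  exact range_eq_univ.1 (hproper.isClosedMap.isClosed_range.closure_eq ▸
    (denseRange_id_add_of_continuous hg hg_supp).closure_range)

end Surjectivity

section Zeros

open Set

theorem exists_eq_zero_of_eventually_inner_pos {F : Type*} [NormedAddCommGroup F]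
    [InnerProductSpace ℝ F] [FiniteDimensional ℝ F] {h : F → F} (hh : Continuous h)
    (hpos : ∀ᶠ x in cocompact F, 0 < inner ℝ (h x) x) : ∃ x, h x = 0 := by
  obtain ⟨K, hK, hposK⟩ := mem_cocompact.1 hpos
  obtain ⟨χ, hχ_one, -, hχ_supp, hχ_mem⟩ :=
    exists_continuous_one_zero_of_isCompact hK isClosed_empty (disjoint_empty K)
  obtain ⟨x, hx⟩ := surjective_id_add_of_hasCompactSupport (g := fun x => χ x • (h x - x))
    (χ.continuous.smul (hh.sub continuous_id)) hχ_supp.smul_right 0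
  have hconvex : (1 - χ x) • x + χ x • h x = 0 := by rw [← hx]; module
  by_cases hxK : x ∈ K
  · exact ⟨x, by simpa [hχ_one hxK] using hconvex⟩
  · have hxpos : 0 < inner ℝ (h x) x := hposK hxK
    have hx_ne : x ≠ 0 := by rintro rfl; simp at hxpos
    have hinner : (1 - χ x) * ‖x‖ ^ 2 + χ x * inner ℝ (h x) x = 0 := by
      simpa [inner_add_left, real_inner_smul_left] using congr_arg (inner ℝ · x) hconvex
    have hχ_eq_zero : χ x = 0 := by
      have := mul_nonneg (sub_nonneg.2 (hχ_mem x).2) (sq_nonneg ‖x‖)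
      exact (nonpos_of_mul_nonpos_left (by linarith) hxpos).antisymm (hχ_mem x).1
    simp [hχ_eq_zero, hx_ne] at hinner

theorem exists_eq_zero_of_eventually_pos {E : Type*} [NormedAddCommGroup E] [NormedSpace ℝ E]
    [FiniteDimensional ℝ E] {T : E → StrongDual ℝ E} (hT : Continuous T)
    (hpos : ∀ᶠ x in cocompact E, 0 < T x x) : ∃ x, T x = 0 := by
  let e := toEuclidean (E := E)
  let toDual := InnerProductSpace.toDual ℝ (EuclideanSpace ℝ (Fin (Module.finrank ℝ E)))
  let h z := toDual.symm (T (e.symm z) ∘L e.symm.toContinuousLinearMap)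
  have hh : Continuous h := toDual.symm.continuous.comp
    ((hT.comp e.symm.continuous).clm_comp continuous_const)
  obtain ⟨z, hz⟩ := exists_eq_zero_of_eventually_inner_pos hh (by
    simpa [h, toDual] using
      e.symm.toHomeomorph.isClosedEmbedding.tendsto_cocompact.eventually hpos)
  have hcomp : T (e.symm z) ∘L e.symm.toContinuousLinearMap = 0 := by
    simpa [h] using hz
  refine ⟨e.symm z, ContinuousLinearMap.ext fun x => ?_⟩
  simpa using DFunLike.congr_fun hcomp (e x)

end Zeros

section WeakTopology

open Metric Set

variable {X : Type*} [NormedAddCommGroup X] [NormedSpace ℝ X]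

theorem continuous_strongDual_comp_toWeakSpace_symm (f : StrongDual ℝ X) :
    Continuous fun x : WeakSpace ℝ X => f ((toWeakSpace ℝ X).symm x) :=
  WeakBilin.eval_continuous _ f

theorem tendsto_toWeakSpace_iff {ι : Type*} {l : Filter ι} {v : ι → X} {u : X} :
    Tendsto (fun i => toWeakSpace ℝ X (v i)) l (𝓝 (toWeakSpace ℝ X u)) ↔
      ∀ f : StrongDual ℝ X, Tendsto (fun i => f (v i)) l (𝓝 (f u)) :=
  WeakBilin.tendsto_iff_forall_eval_tendsto _ fun _ _ h =>
    SeparatingDual.eq_iff_forall_dual_eq.2 fun f => DFunLike.congr_fun h f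

theorem isCompact_closure_toWeakSpace_image_of_isBounded
    (hrefl : Function.Surjective (NormedSpace.inclusionInDoubleDual ℝ X)) {S : Set X}
    (hS : Bornology.IsBounded S) : IsCompact (closure (toWeakSpace ℝ X '' S)) := by
  refine NormedSpace.isCompact_closure_of_isBounded ℝ X _
    (by rwa [preimage_image_eq _ (toWeakSpace ℝ X).injective]) fun Φ _ => ?_
  obtain ⟨x, hx⟩ := hrefl Φ.toStrongDual
  exact ⟨toWeakSpace ℝ X x, hx⟩

theorem exists_mem_forall_dist_lt_of_toWeakSpace_mem_closure {S : Set X} {u : X}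
    (hu : toWeakSpace ℝ X u ∈ closure (toWeakSpace ℝ X '' S)) (D : Finset (StrongDual ℝ X))
    {ε : ℝ} (hε : 0 < ε) : ∃ x ∈ S, ∀ f ∈ D, dist (f x) (f u) < ε := by
  have hnhds : ∀ᶠ z in 𝓝 (toWeakSpace ℝ X u),
      ∀ f ∈ D, dist (f ((toWeakSpace ℝ X).symm z)) (f u) < ε :=
    (Finset.eventually_all D).2 fun f _ =>
      (continuous_strongDual_comp_toWeakSpace_symm f).continuousAt.eventually (ball_mem_nhds _ hε)
  obtain ⟨_, hz, x, hxS, rfl⟩ := mem_closure_iff_nhds.1 hu _ hnhds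
  exact ⟨x, hxS, hz⟩

end WeakTopology

section Norming

open Metric Set

variable {X : Type*} [NormedAddCommGroup X] [NormedSpace ℝ X] {c : ℝ}

/-- `D` is `c`-norming for `Y` if the functionals in `D` of norm at most one recover the norm of
every vector of `Y` up to the factor `c`. -/
def IsNorming (c : ℝ) (D : Set (StrongDual ℝ X)) (Y : Set X) : Prop :=
  ∀ w ∈ Y, ∃ f ∈ D, ‖f‖ ≤ 1 ∧ c * ‖w‖ ≤ f w

theorem IsNorming.mono {D D' : Set (StrongDual ℝ X)} {Y : Set X} (h : IsNorming c D Y)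
    (hD : D ⊆ D') : IsNorming c D' Y := fun w hw =>
  let ⟨f, hf, hf_norm⟩ := h w hw
  ⟨f, hD hf, hf_norm⟩

theorem IsNorming.iUnion {ι : Type*} {D : ι → Set (StrongDual ℝ X)} {Y : ι → Set X}
    (h : ∀ i, IsNorming c (D i) (Y i)) : IsNorming c (⋃ i, D i) (⋃ i, Y i) := fun w hw =>
  let ⟨i, hi⟩ := mem_iUnion.1 hw
  (h i).mono (subset_iUnion D i) w hi

theorem IsNorming.eq_zero_of_mem_closure {D : Set (StrongDual ℝ X)} {Y : Set X}
    (h : IsNorming c D Y) (hc : 0 < c) {y : X} (hy : y ∈ closure Y) (hzero : ∀ f ∈ D, f y = 0) :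
    y = 0 := by
  have hclosed : IsClosed {w | c * ‖w‖ ≤ ‖w - y‖} := isClosed_le (by fun_prop) (by fun_prop)
  have hsub : Y ⊆ {w | c * ‖w‖ ≤ ‖w - y‖} := fun w hw => by
    obtain ⟨f, hfD, hf, hfw⟩ := h w hw
    calc c * ‖w‖ ≤ f w := hfw
      _ = f (w - y) := by rw [map_sub, hzero f hfD, sub_zero]
      _ ≤ ‖w - y‖ :=
        (le_abs_self _).trans ((f.le_of_opNorm_le hf _).trans_eq (one_mul _))
  have hy_le : c * ‖y‖ ≤ ‖y - y‖ := closure_minimal hsub hclosed hy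
  rw [sub_self, norm_zero] at hy_le
  exact norm_le_zero_iff.1 (nonpos_of_mul_nonpos_right hy_le hc)

theorem exists_finset_isNorming (hc : c < 1) (W : Submodule ℝ X) [FiniteDimensional ℝ W] :
    ∃ D : Finset (StrongDual ℝ X), IsNorming c D (W : Set X) := by
  classical
  choose peak hpeak_norm hpeak using exists_dual_vector'' ℝ (E := X)
  obtain ⟨t, ht_sphere, ht_fin, ht⟩ :=
    (isCompact_sphere (0 : W) 1).finite_cover_balls (sub_pos.2 hc)
  refine ⟨insert 0 (ht_fin.toFinset.image fun y : W => peak y), fun w hw => ?_⟩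
  rcases eq_or_ne w 0 with rfl | hw_ne
  · exact ⟨0, by simp, by simp, by simp⟩
  let v : W := ⟨‖w‖⁻¹ • w, W.smul_mem _ hw⟩
  have hv : v ∈ sphere (0 : W) 1 := by simp [v, norm_smul, hw_ne]
  obtain ⟨y, hyt, hvy⟩ := mem_iUnion₂.1 (ht hv)
  refine ⟨peak y, Finset.mem_insert_of_mem (Finset.mem_image_of_mem _ (ht_fin.mem_toFinset.2 hyt)),
    hpeak_norm y, ?_⟩
  have hpeak_v : c ≤ peak y v := by
    have hsub : peak y (y - v : X) ≤ 1 * ‖(y - v : X)‖ :=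
      (le_abs_self _).trans ((peak y).le_of_opNorm_le (hpeak_norm y) _)
    have hdist : ‖(y - v : X)‖ < 1 - c := by simpa [dist_eq_norm, norm_sub_rev] using hvy
    have hy : peak y (y : X) = 1 := by simpa [hpeak] using ht_sphere hyt
    rw [map_sub, hy, one_mul] at hsub
    linarith
  calc c * ‖w‖ ≤ peak y v * ‖w‖ := by gcongr
    _ = peak y w := by simp [v]; field_simp

theorem exists_monotone_finset_isNorming_span (hc : c < 1) :
    ∃ F : Finset X → Finset (StrongDual ℝ X), Monotone F ∧
      ∀ T : Finset X, IsNorming c (F T) (Submodule.span ℝ (T : Set X) : Set X) := by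
  classical
  choose D hD using fun T : Finset X => exists_finset_isNorming hc (Submodule.span ℝ (T : Set X))
  refine ⟨fun T => T.powerset.biUnion D, fun T T' h => ?_, fun T => (hD T).mono ?_⟩
  · exact Finset.biUnion_subset_biUnion_of_subset_left _ (Finset.powerset_mono.2 h)
  · exact Finset.coe_subset.2 (Finset.subset_biUnion_of_mem D (Finset.mem_powerset_self T))

end Norming

section Sequences

open Set

variable {X : Type*} [NormedAddCommGroup X] [NormedSpace ℝ X]

theorem mem_closure_of_mapClusterPt_toWeakSpace {ι : Type*} {l : Filter ι} {s : ι → X} {x : X}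
    {Y : Submodule ℝ X} (hs : ∀ i, s i ∈ Y)
    (hx : MapClusterPt (toWeakSpace ℝ X x) l fun i => toWeakSpace ℝ X (s i)) :
    x ∈ closure (Y : Set X) := by
  have hmem : toWeakSpace ℝ X x ∈ closure (toWeakSpace ℝ X '' Y) :=
    isClosed_closure.mem_of_mapClusterPt hx
      (.of_forall fun i => subset_closure (mem_image_of_mem _ (hs i)))
  rw [← Y.convex.toWeakSpace_closure ℝ] at hmem
  exact (toWeakSpace ℝ X).injective.mem_set_image.1 hmem

theorem strongDual_apply_eq_of_mapClusterPt_toWeakSpace {ι : Type*} {l : Filter ι} {s : ι → X}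
    {x : X} (hx : MapClusterPt (toWeakSpace ℝ X x) l fun i => toWeakSpace ℝ X (s i))
    {f : StrongDual ℝ X} {r : ℝ} (hf : Tendsto (fun i => f (s i)) l (𝓝 r)) : f x = r := by
  have hfx := hx.tendsto_comp
    ((continuous_strongDual_comp_toWeakSpace_symm f).tendsto (toWeakSpace ℝ X x))
  exact eq_of_nhds_neBot (hfx.neBot.mono (inf_le_inf_left _ hf))

theorem exists_seq_tendsto_of_mem_closure_toWeakSpace_image {S : Set X}
    (hS : IsCompact (closure (toWeakSpace ℝ X '' S))) {u : X}
    (hu : toWeakSpace ℝ X u ∈ closure (toWeakSpace ℝ X '' S)) :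
    ∃ s : ℕ → X, (∀ n, s n ∈ S) ∧
      Tendsto (fun n => toWeakSpace ℝ X (s n)) atTop (𝓝 (toWeakSpace ℝ X u)) := by
  classical
  obtain ⟨F, hF_mono, hF⟩ := exists_monotone_finset_isNorming_span (X := X) one_half_lt_one
  choose pick hpickS hpick using fun (n : ℕ) (T : Finset X) =>
    exists_mem_forall_dist_lt_of_toWeakSpace_mem_closure hu (F T)
      (Nat.one_div_pos_of_nat (α := ℝ) (n := n))
  obtain ⟨T, hT_zero, hT_succ⟩ : ∃ T : ℕ → Finset X,
      T 0 = {u} ∧ ∀ n, T (n + 1) = insert (pick n (T n)) (T n) :=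
    ⟨Nat.rec {u} fun n Tn => insert (pick n Tn) Tn, rfl, fun _ => rfl⟩
  have hT_mono : Monotone T :=
    monotone_nat_of_le_succ fun n => (Finset.subset_insert _ _).trans_eq (hT_succ n).symm
  let s n := pick n (T n)
  let Y : Submodule ℝ X := ⨆ n : ℕ, Submodule.span ℝ (T n : Set X)
  have hTY {n : ℕ} {x : X} (hx : x ∈ T n) : x ∈ Y :=
    Submodule.mem_iSup_of_mem n (Submodule.subset_span hx)
  have hY : IsNorming (1 / 2) (⋃ n, (F (T n) : Set (StrongDual ℝ X))) (Y : Set X) := by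
    rw [Submodule.coe_iSup_of_directed _
      (directed_of_isDirected_le fun m n h => Submodule.span_mono (hT_mono h))]
    exact .iUnion fun n => hF (T n)
  have hlim {k : ℕ} {f : StrongDual ℝ X} (hf : f ∈ F (T k)) :
      Tendsto (fun n => f (s n)) atTop (𝓝 (f u)) := by
    refine tendsto_iff_dist_tendsto_zero.2 (squeeze_zero' (.of_forall fun _ => dist_nonneg)
      ?_ tendsto_one_div_add_atTop_nhds_zero_nat)
    filter_upwards [eventually_ge_atTop k] with n hn
    exact (hpick n (T n) f (hF_mono (hT_mono hn) hf)).le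
  refine ⟨s, fun n => hpickS n _, hS.tendsto_nhds_of_unique_mapClusterPt
    (.of_forall fun n => subset_closure (mem_image_of_mem _ (hpickS n _))) fun x _ hx => ?_⟩
  obtain ⟨x, rfl⟩ := (toWeakSpace ℝ X).surjective x
  have hxY : x ∈ closure (Y : Set X) := mem_closure_of_mapClusterPt_toWeakSpace
    (fun n => hTY (n := n + 1) (by simp [hT_succ, s])) hx
  have hsub : x - u ∈ closure (Y : Set X) :=
    Y.topologicalClosure.sub_mem hxY (subset_closure (hTY (n := 0) (by simp [hT_zero])))
  refine congr_arg _ (sub_eq_zero.1 (hY.eq_zero_of_mem_closure one_half_pos hsub fun f hf => ?_))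
  obtain ⟨k, hk⟩ := mem_iUnion.1 hf
  rw [map_sub, strongDual_apply_eq_of_mapClusterPt_toWeakSpace hx (hlim hk), sub_self]

theorem exists_forall_exists_seq_tendsto_of_isBounded_range {ι : Type*} [Preorder ι]
    [IsDirectedOrder ι] [Nonempty ι]
    (hrefl : Function.Surjective (NormedSpace.inclusionInDoubleDual ℝ X)) {g : ι → X}
    (hg : Bornology.IsBounded (range g)) :
    ∃ u : X, ∀ i, ∃ s : ℕ → ι, (∀ n, i ≤ s n) ∧
      ∀ f : StrongDual ℝ X, Tendsto (fun n => f (g (s n))) atTop (𝓝 (f u)) := by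
  have hcompact (S : Set ι) : IsCompact (closure (toWeakSpace ℝ X '' (g '' S))) :=
    isCompact_closure_toWeakSpace_image_of_isBounded hrefl (hg.subset (image_subset_range g S))
  obtain ⟨u, -, hu⟩ := (hcompact univ).exists_mapClusterPt (f := atTop)
    (u := fun i => toWeakSpace ℝ X (g i)) (tendsto_principal.2 (.of_forall fun i =>
      subset_closure (mem_image_of_mem _ (mem_image_of_mem g (mem_univ i)))))
  obtain ⟨u, rfl⟩ := (toWeakSpace ℝ X).surjective u
  refine ⟨u, fun i => ?_⟩
  have hmem : toWeakSpace ℝ X u ∈ closure (toWeakSpace ℝ X '' (g '' Ici i)) := by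
    rw [image_image]
    exact mapClusterPt_atTop_iff_forall_mem_closure.1 hu i
  obtain ⟨x, hx, hxu⟩ := exists_seq_tendsto_of_mem_closure_toWeakSpace_image (hcompact _) hmem
  choose s hs hsx using hx
  exact ⟨s, hs, by simpa only [hsx] using tendsto_toWeakSpace_iff.1 hxu⟩

end Sequences

section Pseudomonotone

open Metric Set

variable {X : Type*} [NormedAddCommGroup X] [NormedSpace ℝ X] {A : X → StrongDual ℝ X}

/-- Pseudomonotone operators in the sense of Brezis, with weak convergence of sequences spelled out
through functionals. A real `limsup` or `liminf` of an unbounded sequence is a junk value. -/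
def IsPseudomonotone (A : X → StrongDual ℝ X) : Prop :=
  ∀ (u : ℕ → X) (u₀ : X),
    (∀ f : StrongDual ℝ X, Tendsto (fun n => f (u n)) atTop (𝓝 (f u₀))) →
    limsup (fun n => A (u n) (u n - u₀)) atTop ≤ 0 →
    ∀ v : X, A u₀ (u₀ - v) ≤ liminf (fun n => A (u n) (u n - v)) atTop

theorem IsPseudomonotone.apply_eq_of_tendsto (hA : IsPseudomonotone A) {u : ℕ → X} {u₀ : X}
    (hu : ∀ f : StrongDual ℝ X, Tendsto (fun n => f (u n)) atTop (𝓝 (f u₀)))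
    (hAu : Tendsto (fun n => A (u n) (u n - u₀)) atTop (𝓝 0)) {w : X} {ℓ : ℝ}
    (hw : Tendsto (fun n => A (u n) w) atTop (𝓝 ℓ)) : A u₀ w = ℓ := by
  have hle {v : X} {r : ℝ} (hv : Tendsto (fun n => A (u n) v) atTop (𝓝 r)) : A u₀ v ≤ r := by
    have hlim : Tendsto (fun n => A (u n) (u n - (u₀ - v))) atTop (𝓝 r) := by
      simpa only [← sub_add, map_add, zero_add] using hAu.add hv
    simpa only [sub_sub_cancel, hlim.liminf_eq] using hA u u₀ hu hAu.limsup_eq.le (u₀ - v)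
  have hneg : A u₀ (-w) ≤ -ℓ := hle (by simpa only [map_neg] using hw.neg)
  rw [map_neg, neg_le_neg_iff] at hneg
  exact (hle hw).antisymm hneg

theorem IsPseudomonotone.continuous_apply (hA : IsPseudomonotone A)
    (hA_bdd : ∀ x, ∃ U ∈ 𝓝 x, Bornology.IsBounded (A '' U)) (w : X) :
    Continuous fun x => A x w := by
  refine continuous_iff_seqContinuous.2 fun {u u₀} hu => ?_
  obtain ⟨U, hU, hAU⟩ := hA_bdd u₀
  obtain ⟨C, hC⟩ := hAU.exists_norm_le
  have hC_ev : ∀ᶠ n in atTop, ‖A (u n)‖ ≤ C :=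
    (hu.eventually hU).mono fun n hn => hC _ (mem_image_of_mem A hn)
  have hAu : Tendsto (fun n => A (u n) (u n - u₀)) atTop (𝓝 0) := by
    refine squeeze_zero_norm' (hC_ev.mono fun n hn => (A (u n)).le_of_opNorm_le hn _) ?_
    simpa using (tendsto_iff_norm_sub_tendsto_zero.1 hu).const_mul C
  refine tendsto_of_subseq_tendsto fun ns hns => ?_
  have hbdd : ∀ᶠ n in atTop, A (u (ns n)) w ∈ closedBall 0 (C * ‖w‖) :=
    (hns.eventually hC_ev).mono fun n hn =>
      mem_closedBall_zero_iff.2 ((A (u (ns n))).le_of_opNorm_le hn w)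
  obtain ⟨ℓ, -, ms, hms, hℓ⟩ :=
    tendsto_subseq_of_frequently_bounded isBounded_closedBall hbdd.frequently
  have hsub : Tendsto (fun k => ns (ms k)) atTop atTop := hns.comp hms.tendsto_atTop
  have hlim : A u₀ w = ℓ := hA.apply_eq_of_tendsto
    (fun f => (f.continuous.tendsto u₀).comp (hu.comp hsub)) (hAu.comp hsub) hℓ
  exact ⟨ms, hlim ▸ hℓ⟩

theorem exists_mem_submodule_forall_apply_eq (hA : ∀ w, Continuous fun x => A x w)
    {b : StrongDual ℝ X} (hAb : ∀ᶠ x in Bornology.cobounded X, b x < A x x) (W : Submodule ℝ X)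
    [FiniteDimensional ℝ W] : ∃ x ∈ W, ∀ w ∈ W, A x w = b w := by
  let T (x : W) : StrongDual ℝ W := (A x - b) ∘L W.subtypeL
  have hT : Continuous T := continuous_clm_apply.2 fun w =>
    ((hA w).comp continuous_subtype_val).sub continuous_const
  have : ProperSpace W := FiniteDimensional.proper ℝ W
  have hW : Tendsto ((↑) : W → X) (cocompact W) (Bornology.cobounded X) :=
    cobounded_eq_cocompact (α := W) ▸ (AntilipschitzWith.subtype_coe _).tendsto_cobounded
  obtain ⟨x, hx⟩ := exists_eq_zero_of_eventually_pos hT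
    ((hW.eventually hAb).mono fun x hx => sub_pos.2 hx)
  exact ⟨x, x.2, fun w hw => sub_eq_zero.1 (DFunLike.congr_fun hx ⟨w, hw⟩)⟩

theorem eventually_lt_apply_self_of_coercive
    (hA : ∀ M : ℝ, ∃ R : ℝ, ∀ x : X, R ≤ ‖x‖ → M ≤ A x x / ‖x‖) (b : StrongDual ℝ X) :
    ∀ᶠ x in Bornology.cobounded X, b x < A x x := by
  obtain ⟨R, hR⟩ := hA (‖b‖ + 1)
  filter_upwards [tendsto_norm_cobounded_atTop.eventually_ge_atTop R,
    tendsto_norm_cobounded_atTop.eventually_gt_atTop 0] with x hxR hx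
  calc b x ≤ ‖b‖ * ‖x‖ := (le_abs_self _).trans (b.le_opNorm x)
    _ < (‖b‖ + 1) * ‖x‖ := by linarith
    _ ≤ A x x := (le_div_iff₀ hx).1 (hR x hxR)

theorem stmt_12_general (hrefl : Function.Surjective (NormedSpace.inclusionInDoubleDual ℝ X))
    (hA : IsPseudomonotone A) (hA_bdd : ∀ x, ∃ U ∈ 𝓝 x, Bornology.IsBounded (A '' U))
    {b : StrongDual ℝ X} (hAb : ∀ᶠ x in Bornology.cobounded X, b x < A x x) :
    ∃ u : X, A u = b := by
  classical
  choose g hg_mem hg using fun F : Finset X =>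
    exists_mem_submodule_forall_apply_eq (hA.continuous_apply hA_bdd) hAb
      (Submodule.span ℝ (F : Set X))
  have hg_bdd : Bornology.IsBounded (range g) :=
    (Bornology.isBounded_compl_iff.2 hAb).subset (range_subset_iff.2 fun F hlt =>
      LT.lt.ne hlt (hg F (g F) (hg_mem F)).symm)
  obtain ⟨u, hu⟩ := exists_forall_exists_seq_tendsto_of_isBounded_range hrefl hg_bdd
  refine ⟨u, ContinuousLinearMap.ext fun w => ?_⟩
  obtain ⟨s, hs, hsu⟩ := hu {u, w}
  have hmem {v : X} (hv : v ∈ ({u, w} : Finset X)) (n : ℕ) :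
      v ∈ Submodule.span ℝ (s n : Set X) := Submodule.subset_span (hs n hv)
  have hAs_sub (n : ℕ) : A (g (s n)) (g (s n) - u) = b (g (s n)) - b u := by
    rw [hg _ _ (Submodule.sub_mem _ (hg_mem _) (hmem (by simp) n)), map_sub]
  have hAs (n : ℕ) : A (g (s n)) w = b w := hg _ w (hmem (by simp) n)
  refine hA.apply_eq_of_tendsto hsu ?_ (by simp only [hAs, tendsto_const_nhds])
  simpa only [hAs_sub, sub_self] using (hsu b).sub_const (b u)

end Pseudomonotone

/-- Theorem 2.10 (main theorem on pseudomonotone operators): if X is a real reflexive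
Banach space and A : X → X* is pseudomonotone, bounded and coercive, then for every
b ∈ X* the equation A u = b has a solution. -/
theorem stmt_12 (X : Type*) [NormedAddCommGroup X] [NormedSpace ℝ X] [CompleteSpace X]
    (hrefl : Function.Surjective (NormedSpace.inclusionInDoubleDual ℝ X))
    (A : X → StrongDual ℝ X)
    -- pseudomonotone
    (hpm : ∀ (u : ℕ → X) (u₀ : X),
      (∀ f : StrongDual ℝ X, Tendsto (fun n => f (u n)) atTop (𝓝 (f u₀))) →
      limsup (fun n => A (u n) (u n - u₀)) atTop ≤ 0 →
      ∀ v : X, A u₀ (u₀ - v) ≤ liminf (fun n => A (u n) (u n - v)) atTop)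
    -- bounded: maps bounded sets to bounded sets
    (hbd : ∀ S : Set X, Bornology.IsBounded S → Bornology.IsBounded (A '' S))
    -- coercive: ⟨A u, u⟩ / ‖u‖ → +∞ as ‖u‖ → ∞
    (hco : ∀ M : ℝ, ∃ R : ℝ, ∀ u : X, R ≤ ‖u‖ → M ≤ A u u / ‖u‖)
    (b : StrongDual ℝ X) :
    ∃ u : X, A u = b :=
  stmt_12_general hrefl hpm
    (fun x => ⟨Metric.ball x 1, Metric.ball_mem_nhds x one_pos, hbd _ Metric.isBounded_ball⟩)
    (eventually_lt_apply_self_of_coercive hco b)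
end

section
/- Let u̲, ū : Ω → ℝ be measurable functions with ∫_Ω |u̲(x)|^{q(x)} dx < ∞, ∫_Ω |ū(x)|^{q(x)} dx < ∞, and u̲(x) ≤ ū(x) for a.e. x ∈ Ω. Define the cut-off function b : Ω × ℝ → ℝ by b(x,s) = (s − ū(x))^{q(x)−1} if s > ū(x), b(x,s) = 0 if u̲(x) ≤ s ≤ ū(x), and b(x,s) = −(u̲(x) − s)^{q(x)−1} if s < u̲(x). Then there exist positive constants â and b̂ such that ∫_Ω b(x, u(x)) u(x) dx ≥ â ∫_Ω |u(x)|^{q(x)} dx − b̂ for every u ∈ L^{q(·)}(Ω). (Coercivity estimate (3.4) for the cut-off functions in the proof of Theorem 3.1.) -/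
open MeasureTheory Filter Topology
open scoped ENNReal

/-! Pointwise, `(|s| / 2) ^ r` is at most `b(s) * s` plus twice the sum of the `r`-th powers of
the obstacles: for `s` above an obstacle `c`, either `|c| ≤ s / 2`, and then `s - c ≥ s / 2`, or
`|s| / 2 ≤ |c|`, and then `b(s) * s` is negative only for `c < s < 0`, where it is at least
`-|c| ^ r`. Since `|b(s) * s|` is bounded by a multiple of the same powers, the estimate may be
integrated, and boundedness of the exponent turns the factor `2 ^ (-q x)` into a constant. -/

section Pointwise

variable {r s c lo hi : ℝ}

/-- The cut-off function with exponent `r - 1`, lower obstacle `lo` and upper obstacle `hi`,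
as a function of `s`. When `hi < lo`, the upper branch takes precedence. -/
noncomputable def cutoff (r lo hi s : ℝ) : ℝ :=
  if hi < s then (s - hi) ^ (r - 1)
  else if s < lo then -((lo - s) ^ (r - 1))
  else 0

lemma rpow_sub_one_mul_self (hs : 0 ≤ s) (hr : 0 < r) : s ^ (r - 1) * s = s ^ r := by
  rw [← Real.rpow_add_one' hs (by linarith), sub_add_cancel]

lemma half_abs_rpow_le_of_lt (hr : 1 ≤ r) (hcs : c < s) :
    (|s| / 2) ^ r ≤ (s - c) ^ (r - 1) * s + 2 * |c| ^ r := by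
  have hr₀ : 0 < r := by linarith
  have := sub_nonneg.2 hr
  have := sub_nonneg.2 hcs.le
  have hc : 0 ≤ |c| ^ r := by positivity
  have le_of_small (h : |s| / 2 ≤ |c|) : (|s| / 2) ^ r ≤ |c| ^ r := by gcongr
  rcases le_or_gt 0 s with hs | hs
  · rcases le_total (|s| / 2) |c| with hsmall | hlarge
    · have hcut : 0 ≤ (s - c) ^ (r - 1) * s := by positivity
      linarith [le_of_small hsmall]
    · rw [abs_of_nonneg hs] at hlarge ⊢
      have hgap : s / 2 ≤ s - c := by linarith [le_abs_self c]
      calc (s / 2) ^ r = (s / 2) ^ (r - 1) * (s / 2) :=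
            (rpow_sub_one_mul_self (by positivity) hr₀).symm
        _ ≤ (s - c) ^ (r - 1) * s := by gcongr; exact half_le_self hs
        _ ≤ (s - c) ^ (r - 1) * s + 2 * |c| ^ r := by linarith
  · have hs_le : |s| ≤ |c| := by
      rw [abs_of_neg hs]
      linarith [neg_le_abs c]
    have hgap : s - c ≤ |c| := by linarith [neg_le_abs c]
    have hcut : (s - c) ^ (r - 1) * |s| ≤ |c| ^ r := by
      rw [← rpow_sub_one_mul_self (abs_nonneg c) hr₀]
      gcongr
    rw [abs_of_neg hs] at hcut
    linarith [le_of_small ((half_le_self (abs_nonneg s)).trans hs_le)]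

lemma abs_rpow_le_add_of_mem_Icc (hr : 0 ≤ r) (hs : s ∈ Set.Icc lo hi) :
    |s| ^ r ≤ |lo| ^ r + |hi| ^ r := by
  have hlo : 0 ≤ |lo| ^ r := by positivity
  have hhi : 0 ≤ |hi| ^ r := by positivity
  rcases le_max_iff.1 (abs_le_max_abs_abs hs.1 hs.2) with h | h
  · linarith [Real.rpow_le_rpow (abs_nonneg s) h hr]
  · linarith [Real.rpow_le_rpow (abs_nonneg s) h hr]

lemma half_abs_rpow_le_cutoff_mul_add (hr : 1 ≤ r) :
    (|s| / 2) ^ r ≤ cutoff r lo hi s * s + 2 * (|lo| ^ r + |hi| ^ r) := by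
  have hlo : 0 ≤ |lo| ^ r := by positivity
  have hhi : 0 ≤ |hi| ^ r := by positivity
  unfold cutoff
  split_ifs with habove hbelow
  · linarith [half_abs_rpow_le_of_lt hr habove]
  · have hreflect := half_abs_rpow_le_of_lt hr (neg_lt_neg hbelow)
    rw [abs_neg, abs_neg, neg_sub_neg] at hreflect
    linarith
  · have hmid := abs_rpow_le_add_of_mem_Icc (by linarith : 0 ≤ r)
      ⟨not_lt.1 hbelow, not_lt.1 habove⟩
    have hhalf : (|s| / 2) ^ r ≤ |s| ^ r := by
      gcongr
      exact half_le_self (abs_nonneg s)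
    linarith

lemma abs_sub_rpow_mul_abs_le (hr : 1 ≤ r) :
    |s - c| ^ (r - 1) * |s| ≤ 2 ^ (r - 1) * (|s| ^ r + |c| ^ r) := by
  have := sub_nonneg.2 hr
  calc |s - c| ^ (r - 1) * |s| ≤ (|s| + |c|) ^ (r - 1) * (|s| + |c|) := by
        gcongr
        · exact abs_sub s c
        · exact le_add_of_nonneg_right (abs_nonneg c)
    _ = (|s| + |c|) ^ r := rpow_sub_one_mul_self (by positivity) (by linarith)
    _ ≤ 2 ^ (r - 1) * (|s| ^ r + |c| ^ r) :=
        mod_cast NNReal.rpow_add_le_mul_rpow_add_rpow (Real.nnabs s) (Real.nnabs c) hr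

lemma abs_cutoff_mul_le (hr : 1 ≤ r) :
    |cutoff r lo hi s * s| ≤ 2 ^ (r - 1) * (|s| ^ r + (|lo| ^ r + |hi| ^ r)) := by
  have abs_branch {d : ℝ} (hd : 0 ≤ d) : |d ^ (r - 1) * s| = |d| ^ (r - 1) * |s| := by
    rw [abs_mul, Real.abs_rpow_of_nonneg hd]
  unfold cutoff
  split_ifs with habove hbelow
  · rw [abs_branch (by linarith)]
    refine (abs_sub_rpow_mul_abs_le hr).trans ?_
    gcongr
    exact le_add_of_nonneg_left (by positivity)
  · rw [neg_mul, abs_neg, abs_branch (by linarith), abs_sub_comm]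
    refine (abs_sub_rpow_mul_abs_le hr).trans ?_
    gcongr
    exact le_add_of_nonneg_right (by positivity)
  · rw [zero_mul, abs_zero]
    positivity

lemma measurable_cutoff :
    Measurable fun z : ℝ × ℝ × ℝ × ℝ => cutoff z.1 z.2.1 z.2.2.1 z.2.2.2 := by
  unfold cutoff
  exact .ite (measurableSet_lt (by fun_prop) (by fun_prop)) (by fun_prop)
    (.ite (measurableSet_lt (by fun_prop) (by fun_prop)) (by fun_prop) measurable_const)

end Pointwise

section Modular

variable {X : Type*} [MeasurableSpace X] {μ : Measure X} {q u lo hi : X → ℝ}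

/-- Membership in the variable exponent Lebesgue space `L^{q(·)}(μ)`, expressed through the
finiteness of the modular `∫ |u x| ^ q x` rather than of the Luxemburg norm. -/
structure MemVarLp (q u : X → ℝ) (μ : Measure X) : Prop where
  aemeasurable : AEMeasurable u μ
  modular_lt_top : ∫⁻ x, ENNReal.ofReal (|u x| ^ q x) ∂μ < ⊤

lemma MemVarLp.integrable_rpow (hq : AEMeasurable q μ) (hu : MemVarLp q u μ) :
    Integrable (fun x => |u x| ^ q x) μ := by
  refine ⟨(hu.aemeasurable.abs.pow hq).aestronglyMeasurable, ?_⟩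
  rw [hasFiniteIntegral_iff_ofReal (ae_of_all _ fun x => by positivity)]
  exact hu.modular_lt_top

lemma integrable_cutoff_mul (hq : AEMeasurable q μ) (hq₁ : ∀ᵐ x ∂μ, 1 ≤ q x)
    (hq_bdd : IsBoundedUnder (· ≤ ·) (ae μ) q) (hlo : MemVarLp q lo μ) (hhi : MemVarLp q hi μ)
    (hu : MemVarLp q u μ) :
    Integrable (fun x => cutoff (q x) (lo x) (hi x) (u x) * u x) μ := by
  obtain ⟨Q, hQ⟩ := hq_bdd.eventually_le
  have hdom : Integrable
      (fun x => 2 ^ (Q - 1) * (|u x| ^ q x + (|lo x| ^ q x + |hi x| ^ q x))) μ :=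
    ((hu.integrable_rpow hq).add
      ((hlo.integrable_rpow hq).add (hhi.integrable_rpow hq))).const_mul _
  have hmeas : AEMeasurable (fun x => cutoff (q x) (lo x) (hi x) (u x)) μ :=
    measurable_cutoff.comp_aemeasurable
      (hq.prodMk (hlo.aemeasurable.prodMk (hhi.aemeasurable.prodMk hu.aemeasurable)))
  refine hdom.mono' (hmeas.mul hu.aemeasurable).aestronglyMeasurable ?_
  filter_upwards [hq₁, hQ] with x hx₁ hxQ
  refine (abs_cutoff_mul_le hx₁).trans ?_
  gcongr
  exact one_le_two

lemma two_rpow_neg_mul_integral_le_cutoff {Q : ℝ} (hq : AEMeasurable q μ)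
    (hq₁ : ∀ᵐ x ∂μ, 1 ≤ q x) (hQ : ∀ᵐ x ∂μ, q x ≤ Q)
    (hlo : MemVarLp q lo μ) (hhi : MemVarLp q hi μ) (hu : MemVarLp q u μ) :
    2 ^ (-Q) * (∫ x, |u x| ^ q x ∂μ) ≤
      (∫ x, cutoff (q x) (lo x) (hi x) (u x) * u x ∂μ) +
        2 * ∫ x, (|lo x| ^ q x + |hi x| ^ q x) ∂μ := by
  have hcut := integrable_cutoff_mul hq hq₁ ⟨Q, hQ⟩ hlo hhi hu
  have hobs : Integrable (fun x => 2 * (|lo x| ^ q x + |hi x| ^ q x)) μ :=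
    ((hlo.integrable_rpow hq).add (hhi.integrable_rpow hq)).const_mul 2
  rw [← integral_const_mul, ← integral_const_mul, ← integral_add hcut hobs]
  refine integral_mono_ae ((hu.integrable_rpow hq).const_mul _) (hcut.add hobs) ?_
  filter_upwards [hq₁, hQ] with x hx₁ hxQ
  calc 2 ^ (-Q) * |u x| ^ q x ≤ 2 ^ (-q x) * |u x| ^ q x := by
        gcongr
        exact one_le_two
    _ = (|u x| / 2) ^ q x := by
        rw [Real.div_rpow (abs_nonneg _) zero_le_two, Real.rpow_neg zero_le_two,
          inv_mul_eq_div]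
    _ ≤ cutoff (q x) (lo x) (hi x) (u x) * u x + 2 * (|lo x| ^ q x + |hi x| ^ q x) :=
        half_abs_rpow_le_cutoff_mul_add hx₁

theorem stmt_16_general (hq : AEMeasurable q μ) (hq₁ : ∀ᵐ x ∂μ, 1 ≤ q x)
    (hq_bdd : IsBoundedUnder (· ≤ ·) (ae μ) q)
    (hlo : MemVarLp q lo μ) (hhi : MemVarLp q hi μ) :
    ∃ a c : ℝ, 0 < a ∧ 0 < c ∧ ∀ u, MemVarLp q u μ →
      a * (∫ x, |u x| ^ q x ∂μ) - c ≤ ∫ x, cutoff (q x) (lo x) (hi x) (u x) * u x ∂μ := by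
  obtain ⟨Q, hQ⟩ := hq_bdd.eventually_le
  refine ⟨2 ^ (-Q), 2 * (∫ x, (|lo x| ^ q x + |hi x| ^ q x) ∂μ) + 1, by positivity,
    by positivity, fun u hu => ?_⟩
  linarith [two_rpow_neg_mul_integral_le_cutoff hq hq₁ hQ hlo hhi hu]

end Modular

lemma isBoundedUnder_ae_restrict_of_subset_isCompact {X : Type*} [TopologicalSpace X]
    [MeasurableSpace X] {μ : Measure X} {s K : Set X} {f : X → ℝ} (hs : MeasurableSet s)
    (hK : IsCompact K) (hsK : s ⊆ K) (hf : ContinuousOn f K) :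
    IsBoundedUnder (· ≤ ·) (ae (μ.restrict s)) f := by
  obtain ⟨C, hC⟩ := hK.bddAbove_image hf
  refine isBoundedUnder_of_eventually_le (a := C) ?_
  filter_upwards [ae_restrict_mem hs] with x hx
  exact hC (Set.mem_image_of_mem f (hsK hx))

theorem stmt_16
    (N : ℕ) (hN : 2 ≤ N)
    (Ω : Set (Fin N → ℝ)) (hΩo : IsOpen Ω) (hΩb : Bornology.IsBounded Ω)
    (p q : (Fin N → ℝ) → ℝ)
    (hpc : ContinuousOn p (closure Ω)) (hqc : ContinuousOn q (closure Ω))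
    (hpq : ∀ x ∈ closure Ω, 1 < p x ∧ p x < (N : ℝ) ∧ p x < q x ∧
      q x < (N : ℝ) * p x / ((N : ℝ) - p x))
    (ul ub : (Fin N → ℝ) → ℝ) (hulm : Measurable ul) (hubm : Measurable ub)
    (hulq : (∫⁻ x in Ω, ENNReal.ofReal (|ul x| ^ q x)) < ⊤)
    (hubq : (∫⁻ x in Ω, ENNReal.ofReal (|ub x| ^ q x)) < ⊤)
    (hle : ∀ᵐ x ∂(volume.restrict Ω), ul x ≤ ub x)
    (b : (Fin N → ℝ) → ℝ → ℝ)
    (hb : b = fun x s =>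
      if ub x < s then (s - ub x) ^ (q x - 1)
      else if s < ul x then -((ul x - s) ^ (q x - 1))
      else 0)
    : ∃ ahat bhat : ℝ, 0 < ahat ∧ 0 < bhat ∧
      ∀ u : (Fin N → ℝ) → ℝ, Measurable u →
        (∫⁻ x in Ω, ENNReal.ofReal (|u x| ^ q x)) < ⊤ →
        ahat * (∫ x in Ω, |u x| ^ q x) - bhat ≤ ∫ x in Ω, b x (u x) * u x := by
  have hΩ := hΩo.measurableSet
  have hq : AEMeasurable q (volume.restrict Ω) := (hqc.mono subset_closure).aemeasurable hΩ
  have hq₁ : ∀ᵐ x ∂volume.restrict Ω, 1 ≤ q x := by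
    filter_upwards [ae_restrict_mem hΩ] with x hx
    obtain ⟨hp₁, -, hpq_lt, -⟩ := hpq x (subset_closure hx)
    exact (hp₁.trans hpq_lt).le
  have hq_bdd := isBoundedUnder_ae_restrict_of_subset_isCompact (μ := volume) hΩ
    hΩb.isCompact_closure subset_closure hqc
  obtain ⟨a, c, ha, hc, hcoercive⟩ := stmt_16_general hq hq₁ hq_bdd
    ⟨hulm.aemeasurable, hulq⟩ ⟨hubm.aemeasurable, hubq⟩
  subst hb
  exact ⟨a, c, ha, hc, fun u hu huq => hcoercive u ⟨hu.aemeasurable, huq⟩⟩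
end

section
/- Let N ≥ 1, let p, q ∈ ℝ with 1 < p and 1 < q, and let μ ≥ 0. Define a : ℝ^N → ℝ^N by a(ξ) = |ξ|^{p−2} ξ + μ |ξ|^{q−2} ξ for ξ ≠ 0 and a(0) = 0. Then a is strictly monotone: (a(ξ) − a(η)) · (ξ − η) > 0 for all ξ, η ∈ ℝ^N with ξ ≠ η. (Pointwise strict monotonicity of the double phase integrand, the core of the strict monotonicity assertion of Proposition 2.3 for the variable exponent double phase operator.) -/
open scoped RealInnerProductSpace

/-!
The integrand is a radial field `x ↦ φ ‖x‖ • x` with `φ r = r ^ (p - 2) + μ * r ^ (q - 2)`. By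
Cauchy–Schwarz, `⟪φ ‖x‖ • x - φ ‖y‖ • y, x - y⟫` is at least
`(φ ‖x‖ * ‖x‖ - φ ‖y‖ * ‖y‖) * (‖x‖ - ‖y‖)`, so on vectors of distinct norms strict monotonicity
of the field follows from that of its profile `r ↦ φ r * r`. On a sphere of radius `r > 0` the
field is multiplication by the constant `φ r > 0`.
-/

section RadialField

variable {E : Type*} [NormedAddCommGroup E] [InnerProductSpace ℝ E]

theorem inner_smul_le_of_nonneg_mul_norm {c : ℝ} {x : E} (hc : 0 ≤ c * ‖x‖) (y : E) :
    ⟪c • x, y⟫ ≤ c * ‖x‖ * ‖y‖ :=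
  calc ⟪c • x, y⟫ ≤ ‖c • x‖ * ‖y‖ := real_inner_le_norm _ _
    _ = |c * ‖x‖| * ‖y‖ := by rw [norm_smul, Real.norm_eq_abs, abs_mul, abs_norm]
    _ = c * ‖x‖ * ‖y‖ := by rw [abs_of_nonneg hc]

theorem mul_norm_sub_mul_norm_sub_le_inner {α β : ℝ} {x y : E}
    (hα : 0 ≤ α * ‖x‖) (hβ : 0 ≤ β * ‖y‖) :
    (α * ‖x‖ - β * ‖y‖) * (‖x‖ - ‖y‖) ≤ ⟪α • x - β • y, x - y⟫ := by
  have hxy := inner_smul_le_of_nonneg_mul_norm hα y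
  have hyx := inner_smul_le_of_nonneg_mul_norm hβ x
  calc (α * ‖x‖ - β * ‖y‖) * (‖x‖ - ‖y‖)
      = α * ‖x‖ ^ 2 - α * ‖x‖ * ‖y‖ - (β * ‖y‖ * ‖x‖ - β * ‖y‖ ^ 2) := by ring
    _ ≤ α * ‖x‖ ^ 2 - ⟪α • x, y⟫ - (⟪β • y, x⟫ - β * ‖y‖ ^ 2) := by gcongr
    _ = ⟪α • x - β • y, x - y⟫ := by
      simp only [inner_sub_left, inner_sub_right, real_inner_smul_left,
        real_inner_self_eq_norm_sq]
      ring

theorem inner_smul_norm_sub_smul_norm_pos {φ : ℝ → ℝ}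
    (hφ : StrictMonoOn (fun r ↦ φ r * r) (Set.Ici 0)) {x y : E} (hxy : x ≠ y) :
    0 < ⟪φ ‖x‖ • x - φ ‖y‖ • y, x - y⟫ := by
  have profile_nonneg (z : E) : 0 ≤ φ ‖z‖ * ‖z‖ := by
    simpa only [mul_zero] using
      hφ.monotoneOn Set.self_mem_Ici (norm_nonneg z) (norm_nonneg z)
  have radial_le := mul_norm_sub_mul_norm_sub_le_inner (profile_nonneg x) (profile_nonneg y)
  rcases lt_trichotomy ‖x‖ ‖y‖ with hlt | heq | hgt
  · have profile_lt := hφ (norm_nonneg x) (norm_nonneg y) hlt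
    exact (mul_pos_of_neg_of_neg (sub_neg.2 profile_lt) (sub_neg.2 hlt)).trans_le radial_le
  · have norm_pos : 0 < ‖x‖ := by
      refine norm_pos_iff.2 fun hx ↦ hxy ?_
      rw [hx, norm_zero] at heq
      rw [hx, norm_eq_zero.1 heq.symm]
    have profile_pos : 0 < φ ‖x‖ * ‖x‖ := by
      simpa only [mul_zero] using hφ Set.self_mem_Ici norm_pos.le norm_pos
    rw [← heq, ← smul_sub, real_inner_smul_left]
    exact mul_pos (pos_of_mul_pos_left profile_pos norm_pos.le)
      (real_inner_self_pos.2 (sub_ne_zero.2 hxy))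
  · have profile_lt := hφ (norm_nonneg y) (norm_nonneg x) hgt
    exact (mul_pos (sub_pos.2 profile_lt) (sub_pos.2 hgt)).trans_le radial_le

end RadialField

section PowerProfile

theorem rpow_sub_two_mul_self {r s : ℝ} (hr : 0 ≤ r) (hs : s ≠ 1) :
    r ^ (s - 2) * r = r ^ (s - 1) := by
  have exponent_ne_zero : s - 2 + 1 ≠ 0 := fun h ↦ hs (by linarith)
  rw [← Real.rpow_add_one' hr exponent_ne_zero]
  congr 1
  ring

theorem strictMonoOn_rpow_sub_two_mul_self {s : ℝ} (hs : 1 < s) :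
    StrictMonoOn (fun r : ℝ ↦ r ^ (s - 2) * r) (Set.Ici 0) :=
  (Real.strictMonoOn_rpow_Ici_of_exponent_pos (sub_pos.2 hs)).congr
    fun _ hr ↦ (rpow_sub_two_mul_self hr hs.ne').symm

theorem monotoneOn_rpow_sub_two_mul_self {s : ℝ} (hs : 1 ≤ s) :
    MonotoneOn (fun r : ℝ ↦ r ^ (s - 2) * r) (Set.Ici 0) := by
  rcases hs.eq_or_lt with rfl | hs
  · -- For `s = 1` the profile `r⁻¹ * r` jumps from `0` to `1` at the origin.
    intro r hr t ht hrt
    have exponent_eq : (1 - 2 : ℝ) = -1 := by norm_num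
    simp only [exponent_eq, Real.rpow_neg_one]
    rcases (Set.mem_Ici.1 hr).eq_or_lt with rfl | hr
    · simpa only [mul_zero] using mul_nonneg (inv_nonneg.2 ht) ht
    · rw [inv_mul_cancel₀ hr.ne', inv_mul_cancel₀ (hr.trans_le hrt).ne']
  · exact (strictMonoOn_rpow_sub_two_mul_self hs).monotoneOn

theorem strictMonoOn_doublePhase_profile {p q μ : ℝ} (hp : 1 < p) (hq : 1 ≤ q) (hμ : 0 ≤ μ) :
    StrictMonoOn (fun r : ℝ ↦ (r ^ (p - 2) + μ * r ^ (q - 2)) * r) (Set.Ici 0) := by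
  simp only [add_mul, mul_assoc]
  exact (strictMonoOn_rpow_sub_two_mul_self hp).add_monotone
    ((monotone_mul_left_of_nonneg hμ).comp_monotoneOn (monotoneOn_rpow_sub_two_mul_self hq))

end PowerProfile

theorem stmt_18_general {E : Type*} [NormedAddCommGroup E] [InnerProductSpace ℝ E]
    {p q μ : ℝ} (hp : 1 < p) (hq : 1 ≤ q) (hμ : 0 ≤ μ) {a : E → E} (ha0 : a 0 = 0)
    (ha : ∀ ξ : E, ξ ≠ 0 → a ξ = (‖ξ‖ ^ (p - 2)) • ξ + (μ * ‖ξ‖ ^ (q - 2)) • ξ)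
    {ξ η : E} (hξη : ξ ≠ η) : 0 < ⟪a ξ - a η, ξ - η⟫ := by
  have a_eq_radial (ζ : E) : a ζ = (‖ζ‖ ^ (p - 2) + μ * ‖ζ‖ ^ (q - 2)) • ζ := by
    rcases eq_or_ne ζ 0 with rfl | hζ
    · rw [ha0, smul_zero]
    · rw [ha ζ hζ, add_smul]
  rw [a_eq_radial ξ, a_eq_radial η]
  exact inner_smul_norm_sub_smul_norm_pos (strictMonoOn_doublePhase_profile hp hq hμ) hξη

/-- Pointwise strict monotonicity of the double phase integrand
a(ξ) = |ξ|^{p−2} ξ + μ |ξ|^{q−2} ξ (a(0) = 0). -/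
theorem stmt_18
    (N : ℕ) (hN : 1 ≤ N) (p q μ : ℝ) (hp : 1 < p) (hq : 1 < q) (hμ : 0 ≤ μ)
    (a : EuclideanSpace ℝ (Fin N) → EuclideanSpace ℝ (Fin N))
    (ha0 : a 0 = 0)
    (ha : ∀ ξ : EuclideanSpace ℝ (Fin N), ξ ≠ 0 →
      a ξ = (‖ξ‖ ^ (p - 2)) • ξ + (μ * ‖ξ‖ ^ (q - 2)) • ξ) :
    ∀ ξ η : EuclideanSpace ℝ (Fin N), ξ ≠ η → 0 < ⟪a ξ - a η, ξ - η⟫ :=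
  fun _ _ hξη ↦ stmt_18_general hp hq.le hμ ha0 ha hξη
end
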